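/- Let F be a function from the class 𝓗 to ℝ ∪ {+∞} which is invariant under isometries of ℝ², is lower semicontinuous along Hausdorff-convergent sequences in 𝓗, satisfies F(S_π(H)) ≤ F(H) for every affine line π and every H ∈ 𝓗 with S_π(H) ∈ 𝓗, and moreover satisfies the strict inequality F(S_π(H)) < F(H) whenever H, S_π(H) ∈ 𝓗 and S_π(H) is not a translate of H. Then every minimizer of F among elements of 𝓗 with unit area is a regular hexagon; i.e. if H ∈ 𝓗, |H| = 1 and F(H) ≤ F(H') for all H' ∈ 𝓗 with |H'| = 1, then H is a regular hexagon. -/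

import Mathlib

open MeasureTheory Metric Filter Real Set
open scoped Topology ENNReal NNReal RealInnerProductSpace

noncomputable section

/-- The Euclidean plane. -/
abbrev E2 : Type := EuclideanSpace ℝ (Fin 2)

/-- The line through `x` with direction `v`. -/
def lineThrough (x v : E2) : Set E2 := {y : E2 | ∃ t : ℝ, y = x + t • v}

/-- Steiner symmetrization of `A` with respect to the affine line `{x | ⟪x, v⟫ = c}`,
where `v` is a unit normal vector of the line. -/
def steiner (v : E2) (c : ℝ) (A : Set E2) : Set E2 :=
  {y : E2 | ∃ x : E2, ⟪x, v⟫ = c ∧ (A ∩ lineThrough x v).Nonempty ∧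
    ∃ r : ℝ, y = x + r • v ∧
      ENNReal.ofReal (2 * |r|) ≤ μH[1] (A ∩ lineThrough x v)}

/-- The class `𝓗` of centrally symmetric convex hexagons (possibly degenerated to
parallelograms), i.e. the convex polygons tiling the plane by translations. -/
def Hex (H : Set E2) : Prop :=
  (∃ x₀ p q r : E2, H = (fun y => x₀ + y) '' convexHull ℝ ({p, q, r, -p, -q, -r} : Set E2)) ∧
  (interior H).Nonempty

/-- The `k`-th vertex of the standard regular hexagon. -/
def hexVertex (k : ℕ) : E2 :=
  (WithLp.equiv 2 (Fin 2 → ℝ)).symm ![Real.cos (k * π / 3), Real.sin (k * π / 3)]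

/-- The standard regular hexagon, with vertices `(cos (kπ/3), sin (kπ/3))`, `k = 0, …, 5`. -/
def stdHexagon : Set E2 := convexHull ℝ (Set.range fun k : Fin 6 => hexVertex k)

/-- A similarity of the plane (composition of a rotation, a dilation and a translation,
possibly with a reflection). -/
def IsSimilarity (f : E2 → E2) : Prop :=
  ∃ s : ℝ, 0 < s ∧ ∀ x y, dist (f x) (f y) = s * dist x y

/-- A regular hexagon is any image of the standard one under a similarity. -/
def IsRegularHexagon (H : Set E2) : Prop := ∃ f : E2 → E2, IsSimilarity f ∧ H = f '' stdHexagon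

/-- Convergence of a sequence of sets in the Hausdorff distance. -/
def HausdorffTendsto (Hn : ℕ → Set E2) (H : Set E2) : Prop :=
  Tendsto (fun n => EMetric.hausdorffEdist (Hn n) H) atTop (𝓝 0)

/-- The planar cross product (determinant) of two vectors. -/
def det2 (u w : E2) : ℝ := u 0 * w 1 - u 1 * w 0

/-- `A, B, C, D, E, F` are (consecutive) vertices of the centrally symmetric hexagon `H`:
`H` is their convex hull, `D, E, F` are the antipodes of `A, B, C` with respect to a center
`o`, and `H` has nonempty interior. -/
def HexWithVertices (A B C D E F : E2) (H : Set E2) : Prop :=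
  H = convexHull ℝ ({A, B, C, D, E, F} : Set E2) ∧
  (∃ o : E2, D = (2:ℝ) • o - A ∧ E = (2:ℝ) • o - B ∧ F = (2:ℝ) • o - C) ∧
  (interior H).Nonempty

/-- The vertices `A, B, C, D, E, F` are listed in counterclockwise order. -/
def CCWList (A B C D E F : E2) : Prop :=
  0 ≤ det2 (B - A) (C - B) ∧ 0 ≤ det2 (C - B) (D - C) ∧ 0 ≤ det2 (D - C) (E - D) ∧
  0 ≤ det2 (E - D) (F - E) ∧ 0 ≤ det2 (F - E) (A - F) ∧ 0 ≤ det2 (A - F) (B - A)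

/-- The six vertices are distinct and no three of them are collinear. -/
def NondegenerateHex (A B C D E F : E2) : Prop :=
  [A, B, C, D, E, F].Pairwise (· ≠ ·) ∧
  ∀ P Q R : E2, P ∈ ({A, B, C, D, E, F} : Set E2) → Q ∈ ({A, B, C, D, E, F} : Set E2) →
    R ∈ ({A, B, C, D, E, F} : Set E2) → P ≠ Q → P ≠ R → Q ≠ R →
      ¬ Collinear ℝ ({P, Q, R} : Set E2)

/-!
Write a centrally symmetric hexagon, up to translation, as the convex hull of `±p, ±q, ±r`, and
symmetrize it along the diagonal joining `p` to `r`, which cuts off the vertex `q`. The result is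
again a centrally symmetric hexagon of the same area. By minimality and strictness it is a
translate of the original one, which forces the perpendicular bisector of the diagonal to pass
through the centre and through `q`: thus `‖p‖ = ‖r‖` and `q` is parallel to `p + r`. For the
diagonals joining `q` to `-p` and to `-r` this means that `r` is parallel to `q - p`, that `p` is
parallel to `q - r`, and that `‖p‖ = ‖q‖ = ‖r‖`, whence `q = p + r` and the hexagon is regular.
-/

section SymmetricHexagon

variable {V : Type*} [AddCommGroup V] [Module ℝ V] {p q r e f x : V} {a b β κ ξ η : ℝ}

lemma convexHull_insert_neg_eq_absConvexHull (p q r : V) :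
    convexHull ℝ {p, q, r, -p, -q, -r} = absConvexHull ℝ {p, q, r} := by
  rw [← convexHull_union_neg_eq_absConvexHull]
  congr 1
  ext x
  simp only [neg_insert, neg_singleton, mem_insert_iff, mem_union, mem_singleton_iff, or_assoc]

lemma smul_add_smul_add_smul_mem_of_absConvex {K : Set V} (hK : AbsConvex ℝ K) {x y z : V}
    (hx : x ∈ K) (hy : y ∈ K) (hz : z ∈ K) {a b c : ℝ} (h : |a| + |b| + |c| ≤ 1) :
    a • x + b • y + c • z ∈ K := by
  have sign_smul_mem : ∀ t : ℝ, ∀ w ∈ K, (SignType.sign t : ℝ) • w ∈ K := fun t w hw =>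
    hK.1.smul_mem (by rcases lt_trichotomy t 0 with ht | ht | ht <;> simp [ht]) hw
  have abs_smul_sign : ∀ (t : ℝ) (w : V), |t| • (SignType.sign t : ℝ) • w = t • w := fun t w => by
    rw [smul_smul, abs_mul_sign]
  have h0 : (0 : V) ∈ K := hK.1.zero_mem ⟨x, hx⟩
  have key := hK.2.sum_mem (t := Finset.univ) (w := ![|a|, |b|, |c|, 1 - (|a| + |b| + |c|)])
    (z := ![(SignType.sign a : ℝ) • x, (SignType.sign b : ℝ) • y, (SignType.sign c : ℝ) • z, 0])
    (by simp [Fin.forall_fin_succ, h]) (by simp [Fin.sum_univ_four])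
    (by simp [Fin.forall_fin_succ, sign_smul_mem _ _ hx, sign_smul_mem _ _ hy,
      sign_smul_mem _ _ hz, h0])
  simpa [Fin.sum_univ_four, abs_smul_sign] using key

lemma mem_absConvexHull_triple :
    x ∈ absConvexHull ℝ {p, q, r} ↔
      ∃ a b c : ℝ, |a| + |b| + |c| ≤ 1 ∧ x = a • p + b • q + c • r := by
  constructor
  · refine fun hx => absConvexHull_min (t := {x | ∃ a b c : ℝ, |a| + |b| + |c| ≤ 1 ∧
      x = a • p + b • q + c • r}) ?_ ⟨?_, ?_⟩ hx
    · rintro y (rfl | rfl | rfl)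
      exacts [⟨1, 0, 0, by simp⟩, ⟨0, 1, 0, by simp⟩, ⟨0, 0, 1, by simp⟩]
    · rw [balanced_iff_smul_mem]
      rintro t ht _ ⟨a, b, c, h, rfl⟩
      refine ⟨t * a, t * b, t * c, ?_, by module⟩
      rw [abs_mul, abs_mul, abs_mul, ← mul_add, ← mul_add]
      exact mul_le_one₀ ht (by positivity) h
    · rintro _ ⟨a, b, c, h, rfl⟩ _ ⟨a', b', c', h', rfl⟩ s t hs ht hst
      refine ⟨s * a + t * a', s * b + t * b', s * c + t * c', ?_, by module⟩
      have triangle : ∀ u v : ℝ, |s * u + t * v| ≤ s * |u| + t * |v| := fun u v =>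
        (abs_add_le _ _).trans_eq (by rw [abs_mul, abs_mul, abs_of_nonneg hs, abs_of_nonneg ht])
      nlinarith [triangle a a', triangle b b', triangle c c']
  · rintro ⟨a, b, c, h, rfl⟩
    exact smul_add_smul_add_smul_mem_of_absConvex absConvex_absConvexHull
      (subset_absConvexHull (by simp)) (subset_absConvexHull (by simp))
      (subset_absConvexHull (by simp)) h

lemma neg_mem_absConvexHull_iff {s : Set V} : -x ∈ absConvexHull ℝ s ↔ x ∈ absConvexHull ℝ s :=
  balanced_absConvexHull.neg_mem_iff

lemma absConvexHull_insert_neg (p : V) (s : Set V) :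
    absConvexHull ℝ (insert (-p) s) = absConvexHull ℝ (insert p s) := by
  have le : ∀ p : V, absConvexHull ℝ (insert (-p) s) ⊆ absConvexHull ℝ (insert p s) := fun p =>
    absConvexHull_min (insert_subset (neg_mem_absConvexHull_iff.2
      (subset_absConvexHull (mem_insert p s))) ((subset_insert p s).trans subset_absConvexHull))
      absConvex_absConvexHull
  exact (le p).antisymm (by simpa only [neg_neg] using le (-p))

lemma absConvexHull_insert_eq_of_mem {s : Set V} (hq : q ∈ absConvexHull ℝ s) :
    absConvexHull ℝ (insert q s) = absConvexHull ℝ s :=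
  (absConvexHull_min (insert_subset hq subset_absConvexHull) absConvex_absConvexHull).antisymm
    (absConvexHull_mono (subset_insert q s))

/-- The symmetric hexagon with consecutive vertices `e - f`, `β • e + κ • f`, `e + f` and their
opposites: the diagonal joining `e - f` to `e + f` has midpoint `e` and direction `f`, and cuts
off the vertex `β • e + κ • f`. -/
def diagHexagon (e f : V) (β κ : ℝ) : Set V :=
  absConvexHull ℝ {e - f, β • e + κ • f, e + f}

/-- The signed distance from `ξ` to the interval `[-1, 1]`, normalized to be `1` at `β`. At height
`ξ` along `e`, this is the smallest coefficient that the vertex `β • e + κ • f` can have in a point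
of `diagHexagon e f β κ`. -/
def overshoot (β ξ : ℝ) : ℝ := (ξ - max (-1) (min 1 ξ)) / (β - 1)

lemma overshoot_of_abs_le_one (hξ : |ξ| ≤ 1) : overshoot β ξ = 0 := by
  rw [abs_le] at hξ
  rw [overshoot, min_eq_right hξ.2, max_eq_right hξ.1, sub_self, zero_div]

lemma overshoot_self (hβ : 1 < β) : overshoot β β = 1 := by
  rw [overshoot, min_eq_left hβ.le, max_eq_right (by norm_num), div_self (by linarith)]

lemma overshoot_cases (hβ : 1 < β) (ξ : ℝ) :
    |ξ| ≤ 1 ∧ overshoot β ξ = 0 ∨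
    0 ≤ overshoot β ξ ∧ ξ = 1 + overshoot β ξ * (β - 1) ∨
    overshoot β ξ ≤ 0 ∧ ξ = -1 + overshoot β ξ * (β - 1) := by
  have hβ' : 0 < β - 1 := sub_pos.2 hβ
  by_cases hξ : |ξ| ≤ 1
  · exact .inl ⟨hξ, overshoot_of_abs_le_one hξ⟩
  refine .inr ?_
  rcases lt_abs.1 (not_le.1 hξ) with h | h
  · have heq : overshoot β ξ = (ξ - 1) / (β - 1) := by
      rw [overshoot, min_eq_left h.le, max_eq_right (by norm_num)]
    refine .inl ⟨?_, ?_⟩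
    · rw [heq]; exact div_nonneg (by linarith) hβ'.le
    · rw [heq, div_mul_cancel₀ _ hβ'.ne']; ring
  · have heq : overshoot β ξ = (ξ + 1) / (β - 1) := by
      rw [overshoot, min_eq_right (by linarith), max_eq_left (by linarith), sub_neg_eq_add]
    refine .inr ⟨?_, ?_⟩
    · rw [heq]; exact div_nonpos_of_nonpos_of_nonneg (by linarith) hβ'.le
    · rw [heq, div_mul_cancel₀ _ hβ'.ne']; ring

lemma abs_sub_overshoot_mul_add_le_one (hβ : 1 < β) (h : |overshoot β ξ| ≤ 1) :
    |ξ - overshoot β ξ * β| + |overshoot β ξ| ≤ 1 := by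
  rw [abs_le] at h
  rcases overshoot_cases hβ ξ with ⟨hξ, h0⟩ | ⟨h0, hξ⟩ | ⟨h0, hξ⟩
  · simpa only [h0, zero_mul, sub_zero, abs_zero, add_zero] using hξ
  · rw [show ξ - overshoot β ξ * β = 1 - overshoot β ξ by linarith, abs_of_nonneg h0,
      abs_of_nonneg (by linarith)]
    linarith
  · rw [show ξ - overshoot β ξ * β = -1 - overshoot β ξ by linarith, abs_of_nonpos h0,
      abs_of_nonpos (by linarith)]
    linarith

lemma abs_sub_overshoot_le (hβ : 1 < β) (h : |ξ - b * β| + |b| ≤ 1) :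
    |b - overshoot β ξ| ≤ |b| - |overshoot β ξ| := by
  have hβ' : 0 < β - 1 := sub_pos.2 hβ
  have hb := neg_abs_le b
  have hb' := le_abs_self b
  obtain ⟨hl, hu⟩ := abs_le.1 (le_sub_iff_add_le.2 h)
  rcases overshoot_cases hβ ξ with ⟨-, h0⟩ | ⟨h0, hξ⟩ | ⟨h0, hξ⟩
  · simp only [h0, sub_zero, abs_zero, le_refl]
  · have hle : overshoot β ξ * (β - 1) ≤ b * (β - 1) := by linarith
    have hle' : overshoot β ξ ≤ b := le_of_mul_le_mul_right hle hβ'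
    rw [abs_of_nonneg (sub_nonneg.2 hle'), abs_of_nonneg h0, abs_of_nonneg (h0.trans hle')]
  · have hle : b * (β - 1) ≤ overshoot β ξ * (β - 1) := by linarith
    have hle' : b ≤ overshoot β ξ := le_of_mul_le_mul_right hle hβ'
    rw [abs_of_nonpos (sub_nonpos.2 hle'), abs_of_nonpos h0, abs_of_nonpos (hle'.trans h0)]
    linarith

lemma abs_add_abs_eq_max (a c : ℝ) : |a| + |c| = max |a + c| |c - a| := by
  grind [abs_of_nonneg, abs_of_nonpos]

lemma smul_add_smul_mem_diagHexagon_iff_exists (hef : LinearIndependent ℝ ![e, f]) :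
    ξ • e + η • f ∈ diagHexagon e f β κ ↔
      ∃ b : ℝ, |ξ - b * β| + |b| ≤ 1 ∧ |η - b * κ| + |b| ≤ 1 := by
  rw [diagHexagon, mem_absConvexHull_triple]
  constructor
  · rintro ⟨a, b, c, h, hx⟩
    have hcoeff : (ξ - (a + c + b * β)) • e + (η - (c - a + b * κ)) • f = 0 := by
      rw [← sub_eq_zero.2 hx]
      module
    obtain ⟨hξ, hη⟩ := LinearIndependent.pair_iff.1 hef _ _ hcoeff
    have hmax := abs_add_abs_eq_max a c
    refine ⟨b, ?_, ?_⟩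
    · rw [show ξ - b * β = a + c by linarith]
      linarith [le_max_left |a + c| |c - a|]
    · rw [show η - b * κ = c - a by linarith]
      linarith [le_max_right |a + c| |c - a|]
  · rintro ⟨b, hξ, hη⟩
    refine ⟨(ξ - b * β - (η - b * κ)) / 2, b, (ξ - b * β + (η - b * κ)) / 2, ?_, by module⟩
    rw [add_right_comm, abs_add_abs_eq_max, ← le_sub_iff_add_le, max_le_iff, ← add_div,
      ← sub_div, sub_add_add_cancel, add_sub_sub_cancel, add_self_div_two, add_self_div_two]
    exact ⟨le_sub_iff_add_le.2 hξ, le_sub_iff_add_le.2 hη⟩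

lemma smul_add_smul_mem_diagHexagon (hef : LinearIndependent ℝ ![e, f]) (hβ : 1 < β)
    (hκ : |κ| ≤ 1) :
    ξ • e + η • f ∈ diagHexagon e f β κ ↔
      |η - overshoot β ξ * κ| ≤ 1 - |overshoot β ξ| := by
  rw [smul_add_smul_mem_diagHexagon_iff_exists hef]
  constructor
  · rintro ⟨b, hξ, hη⟩
    have hb := abs_sub_overshoot_le hβ hξ
    calc |η - overshoot β ξ * κ| = |(η - b * κ) + (b - overshoot β ξ) * κ| := by ring_nf
      _ ≤ |η - b * κ| + |b - overshoot β ξ| * |κ| := by rw [← abs_mul]; exact abs_add_le _ _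
      _ ≤ |η - b * κ| + |b - overshoot β ξ| := by
        gcongr; exact mul_le_of_le_one_right (abs_nonneg _) hκ
      _ ≤ 1 - |overshoot β ξ| := by linarith
  · intro h
    have hle : |overshoot β ξ| ≤ 1 := sub_nonneg.1 ((abs_nonneg _).trans h)
    exact ⟨_, abs_sub_overshoot_mul_add_le_one hβ hle, le_sub_iff_add_le.1 h⟩

end SymmetricHexagon

section ReducedForm

variable {V : Type*} [AddCommGroup V] [Module ℝ V] {p q r : V} {a b : ℝ}

lemma exists_abs_coefficients (hpr : LinearIndependent ℝ ![p, r]) (a b : ℝ) :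
    ∃ p' r' : V, LinearIndependent ℝ ![p', r'] ∧ |a| • p' + |b| • r' = a • p + b • r ∧
      ∀ q : V, absConvexHull ℝ {p', q, r'} = absConvexHull ℝ {p, q, r} := by
  have exists_sign : ∀ (a : ℝ) (p : V), ∃ p' : V, (p' = p ∨ p' = -p) ∧ |a| • p' = a • p := by
    intro a p
    rcases abs_choice a with h | h
    · exact ⟨p, .inl rfl, by rw [h]⟩
    · exact ⟨-p, .inr rfl, by rw [h, neg_smul_neg]⟩
  obtain ⟨p', hp', hap⟩ := exists_sign a p
  obtain ⟨r', hr', hbr⟩ := exists_sign b r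
  refine ⟨p', r', ?_, by rw [hap, hbr], fun q => ?_⟩
  · rcases hp' with rfl | rfl <;> rcases hr' with rfl | rfl <;>
      simpa only [LinearIndependent.pair_neg_left_iff, LinearIndependent.pair_neg_right_iff]
        using hpr
  · have hull_p : absConvexHull ℝ {p', q, r'} = absConvexHull ℝ {p, q, r'} := by
      rcases hp' with rfl | rfl
      exacts [rfl, absConvexHull_insert_neg _ _]
    have hull_r : absConvexHull ℝ {r', p, q} = absConvexHull ℝ {r, p, q} := by
      rcases hr' with rfl | rfl
      exacts [rfl, absConvexHull_insert_neg _ _]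
    have rotate : ∀ s : V, ({p, q, s} : Set V) = {s, p, q} := fun s => by
      rw [pair_comm, insert_comm]
    rw [hull_p, rotate, hull_r, rotate]

lemma smul_add_smul_mem_absConvexHull_pair (h : |a| + |b| ≤ 1) :
    a • p + b • r ∈ absConvexHull ℝ {p, r} := by
  have hp : p ∈ absConvexHull ℝ {p, r} := subset_absConvexHull (by simp)
  have hr : r ∈ absConvexHull ℝ {p, r} := subset_absConvexHull (by simp)
  simpa using smul_add_smul_add_smul_mem_of_absConvex absConvex_absConvexHull hp hr hr
    (c := 0) (by simpa using h)

lemma exists_reduced_form (hpr : LinearIndependent ℝ ![p, r]) (ha : |a| ≤ 1) (hb : |b| ≤ 1) :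
    ∃ (p' r' : V) (a' b' : ℝ), LinearIndependent ℝ ![p', r'] ∧ a' ∈ Ioc 0 1 ∧ b' ∈ Ioc 0 1 ∧
      1 ≤ a' + b' ∧ absConvexHull ℝ {p', a' • p' + b' • r', r'} =
        absConvexHull ℝ {p, a • p + b • r, r} := by
  by_cases hab : |a| + |b| ≤ 1
  · -- A parallelogram is a hexagon whose middle vertex is the midpoint of a side.
    refine ⟨p, r, 1 / 2, 1 / 2, hpr, by norm_num, by norm_num, by norm_num, ?_⟩
    rw [insert_comm, absConvexHull_insert_eq_of_mem
        (smul_add_smul_mem_absConvexHull_pair (by norm_num [abs_of_pos])),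
      insert_comm, absConvexHull_insert_eq_of_mem (smul_add_smul_mem_absConvexHull_pair hab)]
  · obtain ⟨p', r', hpr', hq, hull⟩ := exists_abs_coefficients hpr a b
    refine ⟨p', r', |a|, |b|, hpr', ⟨?_, ha⟩, ⟨?_, hb⟩, ?_, by rw [hq, hull]⟩ <;> linarith

end ReducedForm

section Determinant

lemma det2_smul_eq (p q r : E2) : det2 p r • q = det2 q r • p + det2 p q • r := by
  ext i
  simp only [det2, PiLp.add_apply, PiLp.smul_apply, smul_eq_mul]
  revert i
  exact Fin.forall_fin_two.2 ⟨by ring, by ring⟩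

lemma linearIndependent_of_det2_ne_zero {p r : E2} (h : det2 p r ≠ 0) :
    LinearIndependent ℝ ![p, r] := by
  refine LinearIndependent.pair_iff.2 fun s t hst => ?_
  have h0 : s * p 0 + t * r 0 = 0 := by simpa using congr($hst 0)
  have h1 : s * p 1 + t * r 1 = 0 := by simpa using congr($hst 1)
  constructor
  · refine (mul_eq_zero.1 (?_ : s * det2 p r = 0)).resolve_right h
    simp only [det2]
    linear_combination r 1 * h0 - r 0 * h1
  · refine (mul_eq_zero.1 (?_ : t * det2 p r = 0)).resolve_right h
    simp only [det2]
    linear_combination p 0 * h1 - p 1 * h0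

/-- The planar cross product as a bilinear form. -/
def det2Form : E2 →ₗ[ℝ] E2 →ₗ[ℝ] ℝ :=
  LinearMap.mk₂ ℝ det2
    (by intros; simp only [det2, PiLp.add_apply]; ring)
    (by intros; simp only [det2, PiLp.smul_apply, smul_eq_mul]; ring)
    (by intros; simp only [det2, PiLp.add_apply]; ring)
    (by intros; simp only [det2, PiLp.smul_apply, smul_eq_mul]; ring)

lemma exists_det2_ne_zero_of_span_eq_top {s : Set E2} (hs : Submodule.span ℝ s = ⊤) :
    ∃ x ∈ s, ∃ y ∈ s, det2 x y ≠ 0 := by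
  by_contra! h
  have hzero : det2Form = 0 :=
    LinearMap.ext_on hs fun x hx => LinearMap.ext_on hs fun y hy => h x hx y hy
  have hone : det2Form !₂[1, 0] !₂[0, 1] = 1 := by simp [det2Form, det2]
  simp [hzero] at hone

lemma exists_triple_eq {α : Type*} {p q r x y : α} (hx : x ∈ ({p, q, r} : Set α))
    (hy : y ∈ ({p, q, r} : Set α)) (hxy : x ≠ y) : ∃ z, ({x, z, y} : Set α) = {p, q, r} := by
  rcases hx with rfl | rfl | rfl <;> rcases hy with rfl | rfl | rfl <;>
    first
      | exact absurd rfl hxy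
      | exact ⟨p, by grind⟩
      | exact ⟨q, by grind⟩
      | exact ⟨r, by grind⟩

lemma exists_smul_add_smul_of_span_eq_top {p q r : E2} (h : Submodule.span ℝ {p, q, r} = ⊤) :
    ∃ (x y : E2) (a b : ℝ), LinearIndependent ℝ ![x, y] ∧ |a| ≤ 1 ∧ |b| ≤ 1 ∧
      ({x, a • x + b • y, y} : Set E2) = {p, q, r} := by
  set s : Set E2 := {p, q, r} with hs
  obtain ⟨x₀, hx₀, y₀, hy₀, h₀⟩ := exists_det2_ne_zero_of_span_eq_top h
  -- Cramer's rule bounds both coefficients once `|det2 x y|` is maximal.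
  obtain ⟨⟨x, y⟩, ⟨hx, hy⟩, hmax⟩ := (s ×ˢ s).exists_max_image (fun z => |det2 z.1 z.2|)
    (by simp [hs, Set.Finite.prod]) ⟨(x₀, y₀), hx₀, hy₀⟩
  have hdet : 0 < |det2 x y| := (abs_pos.2 h₀).trans_le (hmax (x₀, y₀) ⟨hx₀, hy₀⟩)
  have hxy : x ≠ y := by
    rintro rfl
    simp [det2, mul_comm] at hdet
  obtain ⟨z, hxzy⟩ := exists_triple_eq hx hy hxy
  have hz : z ∈ s := hxzy.subset (by simp)
  refine ⟨x, y, det2 z y / det2 x y, det2 x z / det2 x y,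
    linearIndependent_of_det2_ne_zero (abs_pos.1 hdet), ?_, ?_, ?_⟩
  · rw [abs_div]
    exact div_le_one_of_le₀ (hmax (z, y) ⟨hz, hy⟩) hdet.le
  · rw [abs_div]
    exact div_le_one_of_le₀ (hmax (x, z) ⟨hx, hz⟩) hdet.le
  · rw [div_eq_inv_mul, div_eq_inv_mul, mul_smul, mul_smul, ← smul_add, ← det2_smul_eq,
      inv_smul_smul₀ (abs_pos.1 hdet), hxzy]

lemma exists_reduced_form_of_nonempty_interior {p q r : E2}
    (h : (interior (absConvexHull ℝ {p, q, r})).Nonempty) :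
    ∃ (p' r' : E2) (a b : ℝ), LinearIndependent ℝ ![p', r'] ∧ a ∈ Ioc 0 1 ∧ b ∈ Ioc 0 1 ∧
      1 ≤ a + b ∧ absConvexHull ℝ {p', a • p' + b • r', r'} = absConvexHull ℝ {p, q, r} := by
  have hspan : Submodule.span ℝ {p, q, r} = ⊤ := by
    refine Submodule.eq_top_of_nonempty_interior' _ (h.mono (interior_mono ?_))
    refine absConvexHull_min Submodule.subset_span ⟨?_, Submodule.convex _⟩
    exact balanced_iff_smul_mem.2 fun t _ x hx => Submodule.smul_mem _ t hx
  obtain ⟨x, y, a, b, hxy, ha, hb, hset⟩ := exists_smul_add_smul_of_span_eq_top hspan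
  rw [← hset]
  exact exists_reduced_form hxy ha hb

end Determinant

section Steiner

variable {A : Set E2} {v y : E2} {c : ℝ}

/-- The chord of `A` on the line through `y` with direction `v`, parametrized from `y`. -/
def chord (v : E2) (A : Set E2) (y : E2) : Set ℝ := {u | y + u • v ∈ A}

lemma chord_add_smul (v : E2) (A : Set E2) (y : E2) (t : ℝ) :
    chord v A (y + t • v) = (t + ·) ⁻¹' chord v A y := by
  ext u
  simp only [chord, mem_ofPred_eq, mem_preimage, add_smul, add_assoc]

lemma volume_chord_add_smul (v : E2) (A : Set E2) (y : E2) (t : ℝ) :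
    volume (chord v A (y + t • v)) = volume (chord v A y) := by
  rw [chord_add_smul, measure_preimage_add]

lemma nonempty_chord_add_smul (t : ℝ) :
    (chord v A (y + t • v)).Nonempty ↔ (chord v A y).Nonempty := by
  rw [chord_add_smul, (add_left_surjective t).nonempty_preimage]

lemma inter_lineThrough_eq_image_chord (v : E2) (A : Set E2) (y : E2) :
    A ∩ lineThrough y v = (fun u : ℝ => y + u • v) '' chord v A y := by
  ext z
  constructor
  · rintro ⟨hz, u, rfl⟩
    exact ⟨u, hz, rfl⟩
  · rintro ⟨u, hu, rfl⟩
    exact ⟨hu, u, rfl⟩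

lemma isometry_add_smul (hv : ‖v‖ = 1) (y : E2) : Isometry fun u : ℝ => y + u • v :=
  Isometry.of_dist_eq fun s t => by
    rw [dist_add_left, dist_eq_norm, ← sub_smul, norm_smul, hv, mul_one, dist_eq_norm]

lemma inner_add_smul_self (hv : ‖v‖ = 1) (y : E2) (t : ℝ) : ⟪y + t • v, v⟫ = ⟪y, v⟫ + t := by
  rw [inner_add_left, real_inner_smul_left, real_inner_self_eq_norm_sq, hv, one_pow, mul_one]

lemma hausdorffMeasure_inter_lineThrough (hv : ‖v‖ = 1) (A : Set E2) (y : E2) :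
    μH[1] (A ∩ lineThrough y v) = volume (chord v A y) := by
  rw [inter_lineThrough_eq_image_chord,
    (isometry_add_smul hv y).hausdorffMeasure_image (.inl zero_le_one), hausdorffMeasure_real]

lemma mem_steiner_iff (hv : ‖v‖ = 1) :
    y ∈ steiner v c A ↔ (chord v A y).Nonempty ∧
      ENNReal.ofReal (2 * |⟪y, v⟫ - c|) ≤ volume (chord v A y) := by
  constructor
  · rintro ⟨x, hx, hne, r, rfl, hr⟩
    rw [inter_lineThrough_eq_image_chord, image_nonempty] at hne
    rw [hausdorffMeasure_inter_lineThrough hv] at hr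
    rw [nonempty_chord_add_smul, volume_chord_add_smul, inner_add_smul_self hv, hx,
      add_sub_cancel_left]
    exact ⟨hne, hr⟩
  · rintro ⟨hne, hle⟩
    have hfoot : y = (y + (c - ⟪y, v⟫) • v) + (⟪y, v⟫ - c) • v := by module
    refine ⟨_, by rw [inner_add_smul_self hv]; ring, ?_, _, hfoot, ?_⟩
    · rwa [inter_lineThrough_eq_image_chord, image_nonempty, nonempty_chord_add_smul]
    · rwa [hausdorffMeasure_inter_lineThrough hv, volume_chord_add_smul]

lemma mem_steiner_iff_of_chord_eq_closedBall (hv : ‖v‖ = 1) {m ρ : ℝ}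
    (h : chord v A y = closedBall m ρ) : y ∈ steiner v c A ↔ |⟪y, v⟫ - c| ≤ ρ := by
  rw [mem_steiner_iff hv, h, nonempty_closedBall, Real.volume_closedBall]
  constructor
  · rintro ⟨hρ, hle⟩
    linarith [(ENNReal.ofReal_le_ofReal_iff (by positivity)).1 hle]
  · intro hle
    exact ⟨(abs_nonneg _).trans hle, ENNReal.ofReal_le_ofReal (by linarith)⟩

lemma measurable_volume_chord (hA : MeasurableSet A) :
    Measurable fun y => volume (chord v A y) :=
  measurable_measure_prodMk_left (s := {z : E2 × ℝ | z.1 + z.2 • v ∈ A})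
    ((by fun_prop : Measurable fun z : E2 × ℝ => z.1 + z.2 • v) hA)

open scoped Pointwise in
lemma isClosed_setOf_nonempty_chord (hA : IsCompact A) :
    IsClosed {y | (chord v A y).Nonempty} := by
  have heq : {y | (chord v A y).Nonempty} = A + (Submodule.span ℝ {v} : Set E2) := by
    ext y
    simp only [mem_ofPred_eq, Set.mem_add, SetLike.mem_coe, Submodule.mem_span_singleton]
    constructor
    · rintro ⟨u, hu⟩
      exact ⟨_, hu, _, ⟨-u, rfl⟩, by module⟩
    · rintro ⟨a, ha, _, ⟨u, rfl⟩, rfl⟩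
      exact ⟨-u, by simpa [chord] using ha⟩
  rw [heq]
  exact (Submodule.span ℝ {v}).closed_of_finiteDimensional.add_left_of_isCompact hA

lemma measurableSet_steiner (hv : ‖v‖ = 1) (hA : IsCompact A) :
    MeasurableSet (steiner v c A) := by
  have heq : steiner v c A = {y | (chord v A y).Nonempty} ∩
      {y | ENNReal.ofReal (2 * |⟪y, v⟫ - c|) ≤ volume (chord v A y)} :=
    ext fun y => mem_steiner_iff hv
  rw [heq]
  exact (isClosed_setOf_nonempty_chord hA).measurableSet.inter
    (measurableSet_le (by fun_prop) (measurable_volume_chord hA.measurableSet))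

lemma isCompact_chord (hv : ‖v‖ = 1) (hA : IsCompact A) (y : E2) : IsCompact (chord v A y) :=
  (isometry_add_smul hv y).isClosedEmbedding.isCompact_preimage hA

lemma volume_chord_steiner (hv : ‖v‖ = 1) (hA : IsCompact A) (y : E2) :
    volume (chord v (steiner v c A) y) = volume (chord v A y) := by
  by_cases hne : (chord v A y).Nonempty
  · have hfin : volume (chord v A y) ≠ ⊤ := (isCompact_chord hv hA y).measure_lt_top.ne
    have hball : chord v (steiner v c A) y =
        closedBall (c - ⟪y, v⟫) ((volume (chord v A y)).toReal / 2) := by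
      ext u
      rw [chord, mem_ofPred_eq, mem_steiner_iff hv, nonempty_chord_add_smul,
        volume_chord_add_smul, ENNReal.ofReal_le_iff_le_toReal hfin, inner_add_smul_self hv,
        mem_closedBall, Real.dist_eq, le_div_iff₀' two_pos, and_iff_right hne]
      ring_nf
    rw [hball, Real.volume_closedBall, mul_div_cancel₀ _ two_ne_zero, ENNReal.ofReal_toReal hfin]
  · have hempty : chord v (steiner v c A) y = ∅ := by
      refine eq_empty_of_forall_notMem fun u hu => hne ?_
      exact (nonempty_chord_add_smul u).1 ((mem_steiner_iff hv).1 hu).1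
    rw [hempty, not_nonempty_iff_eq_empty.1 hne]

lemma exists_orthonormalBasis_apply_one_eq (hv : ‖v‖ = 1) :
    ∃ b : OrthonormalBasis (Fin 2) ℝ E2, b 1 = v := by
  have hon : Orthonormal ℝ (({1} : Set (Fin 2)).domRestrict fun _ => v) := by
    simpa [orthonormal_subsingleton_iff] using hv
  obtain ⟨b, hb⟩ := hon.exists_orthonormalBasis_extension_of_card_eq (by simp)
  exact ⟨b, hb 1 rfl⟩

lemma volume_eq_lintegral_volume_chord (b : OrthonormalBasis (Fin 2) ℝ E2)
    (hA : MeasurableSet A) : volume A = ∫⁻ s : ℝ, volume (chord (b 1) A (s • b 0)) := by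
  let ψ : ℝ × ℝ ≃ᵐ E2 := (MeasurableEquiv.finTwoArrow.symm.trans
    (MeasurableEquiv.toLp 2 (Fin 2 → ℝ))).trans b.measurableEquiv.symm
  have hψ : MeasurePreserving ψ :=
    ((volume_preserving_finTwoArrow ℝ).symm.trans (PiLp.volume_preserving_toLp (Fin 2))).trans
      b.measurePreserving_measurableEquiv.symm
  have hψ_apply : ∀ s t : ℝ, ψ (s, t) = s • b 0 + t • b 1 := by
    intro s t
    change b.repr.symm (WithLp.toLp 2 ![s, t]) = _
    simp [← b.sum_repr_symm, Fin.sum_univ_two]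
  rw [← hψ.measure_preimage_equiv, Measure.volume_eq_prod, Measure.prod_apply (ψ.measurable hA)]
  simp only [chord, ← hψ_apply]
  rfl

lemma volume_steiner (hv : ‖v‖ = 1) (hA : IsCompact A) :
    volume (steiner v c A) = volume A := by
  obtain ⟨b, rfl⟩ := exists_orthonormalBasis_apply_one_eq hv
  simp only [volume_eq_lintegral_volume_chord b (measurableSet_steiner hv hA),
    volume_eq_lintegral_volume_chord b hA.measurableSet, volume_chord_steiner hv hA]

end Steiner

section SteinerHexagon

variable {V : Type*} [AddCommGroup V] [Module ℝ V]

lemma exists_smul_add_smul_eq (hV : Module.finrank ℝ V = 2) {e f : V}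
    (hef : LinearIndependent ℝ ![e, f]) (y : V) : ∃ ξ η : ℝ, ξ • e + η • f = y := by
  have : FiniteDimensional ℝ V := FiniteDimensional.of_finrank_pos (hV ▸ two_pos)
  have hspan := hef.span_eq_top_of_card_eq_finrank' (by simp [hV])
  rw [Matrix.range_cons, Matrix.range_cons, Matrix.range_empty, union_empty,
    singleton_union] at hspan
  exact Submodule.mem_span_pair.1 (hspan ▸ Submodule.mem_top)

lemma chord_image_diagHexagon {e f : E2} (hef : LinearIndependent ℝ ![e, f]) (x₀ : E2)
    {β κ : ℝ} (hβ : 1 < β) (hκ : |κ| ≤ 1) (ξ η : ℝ) :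
    chord (‖f‖⁻¹ • f) ((fun y => x₀ + y) '' diagHexagon e f β κ) (x₀ + (ξ • e + η • f)) =
      closedBall (‖f‖ * (overshoot β ξ * κ - η)) (‖f‖ * (1 - |overshoot β ξ|)) := by
  have hf : 0 < ‖f‖ := norm_pos_iff.2 (hef.ne_zero 1)
  ext u
  have hcoord : x₀ + (ξ • e + η • f) + u • ‖f‖⁻¹ • f =
      x₀ + (ξ • e + (η + u / ‖f‖) • f) := by module
  have hdist : u - ‖f‖ * (overshoot β ξ * κ - η) =
      ‖f‖ * (η + u / ‖f‖ - overshoot β ξ * κ) := by field_simp; ring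
  rw [chord, mem_ofPred_eq, hcoord, (add_right_injective x₀).mem_set_image,
    smul_add_smul_mem_diagHexagon hef hβ hκ, mem_closedBall, Real.dist_eq, hdist, abs_mul,
    abs_norm, mul_le_mul_iff_right₀ hf]

lemma steiner_image_diagHexagon {e f : E2} (hef : LinearIndependent ℝ ![e, f]) (h0 : ⟪e, f⟫ = 0)
    (x₀ : E2) {β κ : ℝ} (hβ : 1 < β) (hκ : |κ| ≤ 1) (μ : ℝ) :
    steiner (‖f‖⁻¹ • f) ⟪x₀, ‖f‖⁻¹ • f⟫ ((fun y => x₀ + y) '' diagHexagon (e + μ • f) f β κ) =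
      (fun y => x₀ + y) '' diagHexagon e f β 0 := by
  have hf0 : f ≠ 0 := hef.ne_zero 1
  have hf : 0 < ‖f‖ := norm_pos_iff.2 hf0
  have hv : ‖‖f‖⁻¹ • f‖ = 1 := norm_smul_inv_norm hf0
  ext y
  obtain ⟨ξ, η, hy⟩ := exists_smul_add_smul_eq (finrank_euclideanSpace_fin (𝕜 := ℝ)) hef (y - x₀)
  obtain rfl : y = x₀ + (ξ • e + η • f) := by rw [hy, add_sub_cancel]
  have hchord := chord_image_diagHexagon ((LinearIndependent.pair_add_smul_left_iff μ).2 hef) x₀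
    hβ hκ ξ (η - ξ * μ)
  rw [show ξ • (e + μ • f) + (η - ξ * μ) • f = ξ • e + η • f by module] at hchord
  have hinner : ⟪x₀ + (ξ • e + η • f), ‖f‖⁻¹ • f⟫ - ⟪x₀, ‖f‖⁻¹ • f⟫ = ‖f‖ * η := by
    rw [inner_add_left, add_sub_cancel_left, inner_add_left, real_inner_smul_left,
      real_inner_smul_left, real_inner_smul_right, real_inner_smul_right, h0,
      real_inner_self_eq_norm_sq]
    field_simp
    ring
  rw [mem_steiner_iff_of_chord_eq_closedBall hv hchord, hinner,
    (add_right_injective x₀).mem_set_image,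
    smul_add_smul_mem_diagHexagon hef hβ (abs_zero.trans_le zero_le_one), mul_zero, sub_zero,
    abs_mul, abs_norm, mul_le_mul_iff_right₀ hf]

end SteinerHexagon

section Translate

variable {E : Type*} [NormedAddCommGroup E] [InnerProductSpace ℝ E]

lemma eq_zero_of_forall_add_mem {K : Set E} (hK : IsCompact K) (hne : K.Nonempty) {z : E}
    (h : ∀ x ∈ K, x + z ∈ K) : z = 0 := by
  obtain ⟨x, hx, hmax⟩ := hK.exists_isMaxOn hne
    (by fun_prop : ContinuousOn (fun x => ⟪x, z⟫) K)
  have hle : ⟪x + z, z⟫ ≤ ⟪x, z⟫ := hmax (h x hx)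
  rw [inner_add_left, add_le_iff_nonpos_right] at hle
  exact real_inner_self_nonpos.1 hle

lemma eq_of_image_add_eq_image_add {K K' : Set E} (hK : IsCompact K) (hne : K.Nonempty)
    (hsymm : ∀ x ∈ K, -x ∈ K) (hsymm' : ∀ x ∈ K', -x ∈ K') {x₀ x₁ : E}
    (h : (fun y => x₀ + y) '' K' = (fun y => x₁ + y) '' K) : K' = K := by
  have mem_iff : ∀ x, x ∈ K' ↔ x₀ - x₁ + x ∈ K := fun x => by
    rw [← (add_right_injective x₀).mem_set_image, h, show x₀ + x = x₁ + (x₀ - x₁ + x) by abel,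
      (add_right_injective x₁).mem_set_image]
  have double_mem : ∀ x ∈ K, x + (2 : ℝ) • (x₀ - x₁) ∈ K := fun x hx => by
    have hneg : -(x₀ - x₁) - x ∈ K' := (mem_iff _).2 (by
      rw [← add_sub_assoc, add_neg_cancel, zero_sub]; exact hsymm x hx)
    convert (mem_iff _).1 (hsymm' _ hneg) using 1
    module
  have hzero := eq_zero_of_forall_add_mem hK hne double_mem
  ext x
  rw [mem_iff, (smul_eq_zero_iff_right two_ne_zero).1 hzero, zero_add]

end Translate

section Rigidity

/-- `H` is Steiner rigid if no Steiner symmetrization turns it into a symmetric hexagon other than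
its own translates. -/
def IsSteinerRigid (H : Set E2) : Prop :=
  ∀ (v : E2) (c : ℝ), ‖v‖ = 1 → Hex (steiner v c H) →
    ∃ x₀ : E2, steiner v c H = (fun y => x₀ + y) '' H

lemma hex_iff {H : Set E2} :
    Hex H ↔ (∃ x₀ p q r : E2, H = (fun y => x₀ + y) '' absConvexHull ℝ {p, q, r}) ∧
      (interior H).Nonempty := by
  simp only [Hex, convexHull_insert_neg_eq_absConvexHull]

lemma isCompact_absConvexHull_triple {V : Type*} [AddCommGroup V] [Module ℝ V]
    [TopologicalSpace V] [IsTopologicalAddGroup V] [ContinuousSMul ℝ V] (p q r : V) :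
    IsCompact (absConvexHull ℝ {p, q, r}) := by
  rw [← convexHull_insert_neg_eq_absConvexHull]
  exact (toFinite _).isCompact_convexHull ℝ

lemma isCompact_of_hex {H : Set E2} (hH : Hex H) : IsCompact H := by
  obtain ⟨⟨x₀, p, q, r, rfl⟩, -⟩ := hex_iff.1 hH
  exact (isCompact_absConvexHull_triple p q r).image (by fun_prop)

lemma volume_pos_of_hex {H : Set E2} (hH : Hex H) : 0 < volume H :=
  Measure.measure_pos_of_nonempty_interior volume hH.2

lemma hex_image_add_absConvexHull {x₀ p q r : E2}
    (h : 0 < volume ((fun y => x₀ + y) '' absConvexHull ℝ {p, q, r})) :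
    Hex ((fun y => x₀ + y) '' absConvexHull ℝ {p, q, r}) := by
  refine hex_iff.2 ⟨⟨x₀, p, q, r, rfl⟩, ?_⟩
  set H := (fun y => x₀ + y) '' absConvexHull ℝ {p, q, r}
  by_contra hempty
  have hconv : Convex ℝ H := convex_absConvexHull.translate x₀
  have hfrontier : H ⊆ frontier H := by
    rw [frontier, not_nonempty_iff_eq_empty.1 hempty, sdiff_empty]
    exact subset_closure
  exact h.ne' (measure_mono_null hfrontier (hconv.addHaar_frontier volume))

lemma diagHexagon_eq_of_isSteinerRigid {e f x₀ : E2} {β κ μ : ℝ}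
    (hef : LinearIndependent ℝ ![e, f]) (h0 : ⟪e, f⟫ = 0) (hβ : 1 < β) (hκ : |κ| ≤ 1)
    (hH : Hex ((fun y => x₀ + y) '' diagHexagon (e + μ • f) f β κ))
    (hrigid : IsSteinerRigid ((fun y => x₀ + y) '' diagHexagon (e + μ • f) f β κ)) :
    diagHexagon e f β 0 = diagHexagon (e + μ • f) f β κ := by
  have hv : ‖‖f‖⁻¹ • f‖ = 1 := norm_smul_inv_norm (hef.ne_zero 1)
  have hsteiner := steiner_image_diagHexagon hef h0 x₀ hβ hκ μ
  have hvol := volume_steiner (c := ⟪x₀, ‖f‖⁻¹ • f⟫) hv (isCompact_of_hex hH)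
  have hHex : Hex ((fun y => x₀ + y) '' diagHexagon e f β 0) :=
    hex_image_add_absConvexHull (by
      change 0 < volume ((fun y => x₀ + y) '' diagHexagon e f β 0)
      rw [← hsteiner, hvol]
      exact volume_pos_of_hex hH)
  obtain ⟨x₁, hx₁⟩ := hrigid _ _ hv (hsteiner ▸ hHex)
  rw [hsteiner, image_image] at hx₁
  simp only [← add_assoc] at hx₁
  exact eq_of_image_add_eq_image_add (isCompact_absConvexHull_triple _ _ _)
    ⟨_, subset_absConvexHull (mem_insert _ _)⟩ (fun _ => neg_mem_absConvexHull_iff.2)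
    (fun _ => neg_mem_absConvexHull_iff.2) hx₁

lemma eq_zero_of_isSteinerRigid_diagHexagon {e f x₀ : E2} {β κ μ : ℝ}
    (hef : LinearIndependent ℝ ![e, f]) (h0 : ⟪e, f⟫ = 0) (hβ : 1 < β) (hκ : |κ| ≤ 1)
    (hH : Hex ((fun y => x₀ + y) '' diagHexagon (e + μ • f) f β κ))
    (hrigid : IsSteinerRigid ((fun y => x₀ + y) '' diagHexagon (e + μ • f) f β κ)) :
    μ = 0 ∧ κ = 0 := by
  have heq := diagHexagon_eq_of_isSteinerRigid hef h0 hβ hκ hH hrigid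
  have mem_iff : ∀ ξ η : ℝ, ξ • e + η • f ∈ diagHexagon (e + μ • f) f β κ ↔
      |η| ≤ 1 - |overshoot β ξ| := fun ξ η => by
    rw [← heq, smul_add_smul_mem_diagHexagon hef hβ (abs_zero.trans_le zero_le_one), mul_zero,
      sub_zero]
  have hμ : μ = 0 := by
    have hp := (mem_iff 1 (μ - 1)).1 (subset_absConvexHull (.inl (by module)))
    have hr := (mem_iff 1 (μ + 1)).1 (subset_absConvexHull (.inr (.inr
      (show _ = _ by module))))
    rw [overshoot_of_abs_le_one abs_one.le, abs_zero, sub_zero, abs_le] at hp hr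
    linarith
  have hq := (mem_iff β (β * μ + κ)).1 (subset_absConvexHull (.inr (.inl (by module))))
  rw [overshoot_self hβ, abs_one, sub_self, hμ, mul_zero, zero_add] at hq
  exact ⟨hμ, abs_nonpos_iff.1 hq⟩

lemma inner_eq_zero_of_isSteinerRigid_diagHexagon {e f x₀ : E2} {β κ : ℝ}
    (hef : LinearIndependent ℝ ![e, f]) (hβ : 1 < β) (hκ : |κ| ≤ 1)
    (hH : Hex ((fun y => x₀ + y) '' diagHexagon e f β κ))
    (hrigid : IsSteinerRigid ((fun y => x₀ + y) '' diagHexagon e f β κ)) :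
    ⟪e, f⟫ = 0 ∧ κ = 0 := by
  have hf : ⟪f, f⟫ ≠ 0 := inner_self_ne_zero.2 (hef.ne_zero 1)
  set μ := ⟪e, f⟫ / ⟪f, f⟫ with hμ
  have hproj : e = (e + (-μ) • f) + μ • f := by module
  have horth : ⟪e + (-μ) • f, f⟫ = 0 := by
    rw [inner_add_left, real_inner_smul_left, hμ]
    field_simp
    ring
  rw [hproj] at hH hrigid
  obtain ⟨hμ0, hκ0⟩ := eq_zero_of_isSteinerRigid_diagHexagon
    ((LinearIndependent.pair_add_smul_left_iff (-μ)).2 hef) horth hβ hκ hH hrigid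
  exact ⟨(div_eq_zero_iff.1 (hμ ▸ hμ0)).resolve_right hf, hκ0⟩

lemma eq_and_norm_eq_of_isSteinerRigid {p r x₀ : E2} {a b : ℝ}
    (hpr : LinearIndependent ℝ ![p, r]) (hab : 1 < a + b) (hab' : |b - a| ≤ 1)
    (hH : Hex ((fun y => x₀ + y) '' absConvexHull ℝ {p, a • p + b • r, r}))
    (hrigid : IsSteinerRigid ((fun y => x₀ + y) '' absConvexHull ℝ {p, a • p + b • r, r})) :
    a = b ∧ ‖p‖ = ‖r‖ := by
  have hdiag : absConvexHull ℝ {p, a • p + b • r, r} =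
      diagHexagon ((1 / 2 : ℝ) • p + (1 / 2 : ℝ) • r) ((-(1 / 2) : ℝ) • p + (1 / 2 : ℝ) • r)
        (a + b) (b - a) := by
    have hp : p = (1 / 2 : ℝ) • p + (1 / 2 : ℝ) • r - ((-(1 / 2) : ℝ) • p + (1 / 2 : ℝ) • r) := by
      module
    have hr : r = (1 / 2 : ℝ) • p + (1 / 2 : ℝ) • r + ((-(1 / 2) : ℝ) • p + (1 / 2 : ℝ) • r) := by
      module
    have hq : a • p + b • r = (a + b) • ((1 / 2 : ℝ) • p + (1 / 2 : ℝ) • r) +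
        (b - a) • ((-(1 / 2) : ℝ) • p + (1 / 2 : ℝ) • r) := by module
    rw [diagHexagon, ← hp, ← hq, ← hr]
  rw [hdiag] at hH hrigid
  obtain ⟨hinner, hba⟩ := inner_eq_zero_of_isSteinerRigid_diagHexagon
    ((LinearIndependent.pair_add_smul_add_smul_iff _ _ _ _).2 ⟨hpr, by norm_num⟩) hab hab' hH hrigid
  refine ⟨(sub_eq_zero.1 hba).symm, ?_⟩
  rw [← sq_eq_sq₀ (norm_nonneg _) (norm_nonneg _), ← real_inner_self_eq_norm_sq,
    ← real_inner_self_eq_norm_sq]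
  simp only [inner_add_left, inner_add_right, real_inner_smul_left, real_inner_smul_right,
    real_inner_comm p r] at hinner
  linarith

lemma eq_one_and_norm_eq_of_isSteinerRigid {p r x₀ : E2} {a b : ℝ}
    (hpr : LinearIndependent ℝ ![p, r]) (ha : a ∈ Ioc 0 1) (hb : b ∈ Ioc 0 1) (hab : 1 ≤ a + b)
    (hH : Hex ((fun y => x₀ + y) '' absConvexHull ℝ {p, a • p + b • r, r}))
    (hrigid : IsSteinerRigid ((fun y => x₀ + y) '' absConvexHull ℝ {p, a • p + b • r, r})) :
    a = 1 ∧ ‖a • p + b • r‖ = ‖p‖ := by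
  -- The diagonal joining `q` to `-p` cuts off the vertex `r`.
  set q := a • p + b • r with hq
  have hb0 : b ≠ 0 := hb.1.ne'
  have hr : r = (1 / b) • q + (a / b) • -p := by
    rw [hq, smul_add, smul_smul, smul_smul, one_div_mul_cancel hb0, smul_neg, div_eq_inv_mul,
      div_eq_inv_mul]
    module
  have hqp : LinearIndependent ℝ ![q, -p] := by
    have := (LinearIndependent.pair_add_smul_add_smul_iff a b (-1) 0).2 ⟨hpr, by simpa using hb0⟩
    simpa using this
  have hhull : absConvexHull ℝ {p, q, r} =
      absConvexHull ℝ {q, (1 / b) • q + (a / b) • -p, -p} := by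
    rw [← hr, ← absConvexHull_insert_neg, pair_comm, insert_comm, pair_comm, insert_comm]
  have hsum : 1 < 1 / b + a / b := by
    rw [← add_div, one_lt_div hb.1]
    linarith [ha.1, hb.2]
  have hdiff : |a / b - 1 / b| ≤ 1 := by
    rw [← sub_div, abs_div, abs_of_pos hb.1, div_le_one hb.1, abs_le]
    constructor <;> linarith [ha.2]
  rw [hhull] at hH hrigid
  obtain ⟨h1, hnorm⟩ := eq_and_norm_eq_of_isSteinerRigid hqp hsum hdiff hH hrigid
  exact ⟨((div_left_inj' hb0).1 h1).symm, by rw [hnorm, norm_neg]⟩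

end Rigidity

section RegularHexagon

lemma image_absConvexHull {V W : Type*} [AddCommGroup V] [Module ℝ V] [AddCommGroup W]
    [Module ℝ W] (g : V →ₗ[ℝ] W) (s : Set V) :
    g '' absConvexHull ℝ s = absConvexHull ℝ (g '' s) := by
  rw [← convexHull_union_neg_eq_absConvexHull, ← convexHull_union_neg_eq_absConvexHull,
    g.image_convexHull, image_union, ← image_neg_eq_neg, ← image_neg_eq_neg, image_image,
    image_image]
  simp only [map_neg]

lemma hexVertex_add_three (k : ℕ) : hexVertex (k + 3) = -hexVertex k := by
  have hangle : ((k + 3 : ℕ) : ℝ) * π / 3 = k * π / 3 + π := by push_cast; ring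
  simp only [hexVertex, hangle, Real.cos_add_pi, Real.sin_add_pi]
  ext i
  fin_cases i <;> simp

lemma hexVertex_zero : hexVertex 0 = !₂[1, 0] := by
  ext i
  fin_cases i <;> simp [hexVertex]

lemma hexVertex_one : hexVertex 1 = !₂[1 / 2, √3 / 2] := by
  ext i
  fin_cases i <;> simp [hexVertex]

lemma hexVertex_two : hexVertex 2 = !₂[-(1 / 2), √3 / 2] := by
  have hangle : (2 : ℝ) * π / 3 = π - π / 3 := by ring
  ext i
  fin_cases i <;> simp [hexVertex, hangle, Real.cos_pi_sub, Real.sin_pi_sub]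

lemma stdHexagon_eq_absConvexHull :
    stdHexagon = absConvexHull ℝ {hexVertex 0, hexVertex 1, hexVertex 2} := by
  rw [stdHexagon, ← convexHull_insert_neg_eq_absConvexHull]
  congr 1
  ext x
  simp [Fin.exists_fin_succ, ← hexVertex_add_three, eq_comm (a := x)]

/-- The linear map taking the standard basis of the plane to `u`, `w`. -/
def frameMap (u w : E2) : E2 →ₗ[ℝ] E2 where
  toFun x := x 0 • u + x 1 • w
  map_add' x y := by
    simp only [PiLp.add_apply]
    module
  map_smul' t x := by
    simp only [PiLp.smul_apply, smul_eq_mul, RingHom.id_apply]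
    module

lemma frameMap_apply (u w x : E2) : frameMap u w x = x 0 • u + x 1 • w := rfl

lemma norm_frameMap {u w : E2} (h : ‖w‖ = ‖u‖) (h0 : ⟪u, w⟫ = 0) (x : E2) :
    ‖frameMap u w x‖ = ‖u‖ * ‖x‖ := by
  rw [← sq_eq_sq₀ (norm_nonneg _) (by positivity), mul_pow, EuclideanSpace.norm_sq_eq x,
    frameMap_apply, norm_add_sq_real, real_inner_smul_left, real_inner_smul_right, h0, norm_smul,
    norm_smul, h, Fin.sum_univ_two]
  ring

lemma isRegularHexagon_image_add {p r : E2} (x₀ : E2) (hp : p ≠ 0) (hr : ‖r‖ = ‖p‖)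
    (hpr : ‖p + r‖ = ‖p‖) :
    IsRegularHexagon ((fun y => x₀ + y) '' absConvexHull ℝ {p, p + r, r}) := by
  have hinner : ⟪p, r⟫ = -‖p‖ ^ 2 / 2 := by
    have := norm_add_sq_real p r
    rw [hpr, hr] at this
    linarith
  set w : E2 := (√3)⁻¹ • (p + (2 : ℝ) • r) with hw
  have hpw : ⟪p, w⟫ = 0 := by
    rw [hw, real_inner_smul_right, inner_add_right, real_inner_smul_right,
      real_inner_self_eq_norm_sq, hinner]
    ring
  have hnorm : ‖w‖ = ‖p‖ := by
    rw [← sq_eq_sq₀ (norm_nonneg _) (norm_nonneg _), hw, norm_smul, mul_pow, norm_add_sq_real,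
      real_inner_smul_right, hinner, norm_smul, hr, norm_inv, inv_pow, Real.norm_eq_abs, sq_abs,
      Real.sq_sqrt zero_le_three, Real.norm_two]
    ring
  have hw' : (√3 / 2) • w = (1 / 2 : ℝ) • p + r := by
    rw [hw, smul_smul, show √3 / 2 * (√3)⁻¹ = (1 / 2 : ℝ) by field_simp]
    module
  have h0 : frameMap p w (hexVertex 0) = p := by simp [hexVertex_zero, frameMap_apply]
  have h1 : frameMap p w (hexVertex 1) = p + r := by
    simp only [hexVertex_one, frameMap_apply, Matrix.cons_val_zero, Matrix.cons_val_one, hw']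
    module
  have h2 : frameMap p w (hexVertex 2) = r := by
    simp only [hexVertex_two, frameMap_apply, Matrix.cons_val_zero, Matrix.cons_val_one, hw']
    module
  refine ⟨fun x => x₀ + frameMap p w x, ⟨‖p‖, norm_pos_iff.2 hp, fun x y => ?_⟩, ?_⟩
  · rw [dist_add_left, dist_eq_norm, ← map_sub, norm_frameMap hnorm hpw, dist_eq_norm]
  · rw [stdHexagon_eq_absConvexHull, ← image_image (fun y => x₀ + y) (frameMap p w),
      image_absConvexHull, image_insert_eq, image_pair, h0, h1, h2]

lemma isRegularHexagon_of_isSteinerRigid {H : Set E2} (hH : Hex H) (hrigid : IsSteinerRigid H) :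
    IsRegularHexagon H := by
  obtain ⟨⟨x₀, p₀, q₀, r₀, rfl⟩, hint⟩ := hex_iff.1 hH
  have hint' : (interior (absConvexHull ℝ {p₀, q₀, r₀})).Nonempty := by
    have := (Homeomorph.addLeft x₀).image_interior (absConvexHull ℝ {p₀, q₀, r₀})
    rw [Homeomorph.coe_addLeft] at this
    rwa [← this, image_nonempty] at hint
  obtain ⟨p, r, a, b, hpr, ha, hb, hab, hhull⟩ := exists_reduced_form_of_nonempty_interior hint'
  rw [← hhull] at hH hrigid ⊢
  obtain ⟨ha1, hp⟩ := eq_one_and_norm_eq_of_isSteinerRigid hpr ha hb hab hH hrigid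
  have hswap : absConvexHull ℝ {p, a • p + b • r, r} =
      absConvexHull ℝ {r, b • r + a • p, p} := by
    rw [insert_comm, pair_comm, insert_comm, add_comm (a • p), pair_comm, insert_comm]
  rw [hswap] at hH hrigid
  obtain ⟨hb1, hr⟩ := eq_one_and_norm_eq_of_isSteinerRigid (LinearIndependent.pair_symm_iff.1 hpr)
    hb ha (by rwa [add_comm]) hH hrigid
  subst ha1 hb1
  simp only [one_smul] at hp hr ⊢
  exact isRegularHexagon_image_add x₀ (hpr.ne_zero 0) (by rw [← hr, add_comm, hp]) hp

end RegularHexagon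

theorem statement2_general {α : Type*} [Preorder α] (F : Set E2 → α)
    (hstrict : ∀ (v : E2) (c : ℝ) (H : Set E2), ‖v‖ = 1 → Hex H →
      Hex (steiner v c H) → (¬ ∃ x₀ : E2, steiner v c H = (fun y => x₀ + y) '' H) →
      F (steiner v c H) < F H)
    {H : Set E2} (hH : Hex H)
    (hmin : ∀ H' : Set E2, Hex H' → volume H' = volume H → F H ≤ F H') :
    IsRegularHexagon H := by
  refine isRegularHexagon_of_isSteinerRigid hH fun v c hv hS => ?_
  by_contra htranslate
  exact (hmin _ hS (volume_steiner hv (isCompact_of_hex hH))).not_gt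
    (hstrict v c H hv hH hS htranslate)

/-- If moreover the functional strictly decreases under any Steiner
symmetrization which does not merely translate the set, then every minimizer over
unit-area elements of `𝓗` is a regular hexagon. -/
theorem statement2 (F : Set E2 → EReal)
    (hbot : ∀ H : Set E2, Hex H → F H ≠ ⊥)
    (hiso : ∀ (f : E2 ≃ᵢ E2) (H : Set E2), Hex H → F (f '' H) = F H)
    (hlsc : ∀ (Hn : ℕ → Set E2) (H : Set E2), (∀ n, Hex (Hn n)) → Hex H →
      HausdorffTendsto Hn H → F H ≤ liminf (fun n => F (Hn n)) atTop)
    (hsteiner : ∀ (v : E2) (c : ℝ) (H : Set E2), ‖v‖ = 1 → Hex H →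
      Hex (steiner v c H) → F (steiner v c H) ≤ F H)
    (hstrict : ∀ (v : E2) (c : ℝ) (H : Set E2), ‖v‖ = 1 → Hex H →
      Hex (steiner v c H) → (¬ ∃ x₀ : E2, steiner v c H = (fun y => x₀ + y) '' H) →
      F (steiner v c H) < F H) :
    ∀ H : Set E2, Hex H → volume H = 1 →
      (∀ H' : Set E2, Hex H' → volume H' = 1 → F H ≤ F H') →
      IsRegularHexagon H := by
  intro H hH hvol hmin
  exact statement2_general F hstrict hH (by rwa [hvol])
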